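/- For every m with 1 ≤ m ≤ n and every j with 1 ≤ j ≤ k, define for nonnegative integers r, s with r+s = m the polynomial A^{(rs)}_j = Σ_{d=0}^{j−1}(j+r−2d−1)·p_d·p_{j+r−d−1}·q_s + (j+s−1)·(Σ_{d=0}^{j−1} p_d·q_{j+s−d−1})·p_r. Then Σ_{r+s=m, r,s≥0} A^{(rs)}_j lies in the ideal I. -/

import Mathlib

open MvPolynomial Finset

/-- The polynomial ring `P = ℂ[p_1,…,p_k,q_1,…,q_{n-k}]`:
the variable `Sum.inl j` is `p_{j+1}` and `Sum.inr l` is `q_{l+1}`. -/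
abbrev PR (n k : ℕ) := MvPolynomial (Fin k ⊕ Fin (n - k)) ℂ

/-- `pZ n k a` is the Chern class generator `p_a`, with the conventions `p_0 = 1`
and `p_a = 0` for `a < 0` or `a > k`. -/
noncomputable def pZ (n k : ℕ) (a : ℤ) : PR n k :=
  if a = 0 then 1
  else if h : 1 ≤ a ∧ a ≤ (k : ℤ) then
    MvPolynomial.X (Sum.inl ⟨(a - 1).toNat, by omega⟩)
  else 0

/-- `qZ n k a` is the Chern class generator `q_a`, with the conventions `q_0 = 1`
and `q_a = 0` for `a < 0` or `a > n-k`. -/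
noncomputable def qZ (n k : ℕ) (a : ℤ) : PR n k :=
  if a = 0 then 1
  else if h : 1 ≤ a ∧ a ≤ ((n - k : ℕ) : ℤ) then
    MvPolynomial.X (Sum.inr ⟨(a - 1).toNat, by omega⟩)
  else 0

/-- `R_m = Σ_{r+s=m, r,s ≥ 0} p_r q_s`. -/
noncomputable def Rm (n k : ℕ) (m : ℕ) : PR n k :=
  ∑ x ∈ Finset.HasAntidiagonal.antidiagonal m, pZ n k x.1 * qZ n k x.2

/-- The ideal `I ⊆ P` generated by `R_1, …, R_n`. -/
noncomputable def Igr (n k : ℕ) : Ideal (PR n k) :=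
  Ideal.span ((fun m => Rm n k m) '' (Finset.Icc 1 n : Finset ℕ))

/-- Multiplication by `g` as a linear endomorphism of `P`. -/
noncomputable def Mop (n k : ℕ) (g : PR n k) : Module.End ℂ (PR n k) :=
  LinearMap.mulLeft ℂ g

/-- The partial derivative with respect to the variable `i`, as a linear endomorphism. -/
noncomputable def Pd (n k : ℕ) (i : Fin k ⊕ Fin (n - k)) : Module.End ℂ (PR n k) :=
  (MvPolynomial.pderiv i).toLinearMap

/-- `A^{(rs)}_j = Σ_{d=0}^{j-1}(j+r-2d-1)·p_d·p_{j+r-d-1}·q_s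
               + (j+s-1)·(Σ_{d=0}^{j-1} p_d·q_{j+s-d-1})·p_r`. -/
noncomputable def Apoly (n k : ℕ) (j r s : ℕ) : PR n k :=
  (∑ d ∈ Finset.range j, (((j : ℂ) + (r : ℕ) - 2 * (d : ℕ) - 1)) •
      (pZ n k (d : ℕ) * pZ n k ((j : ℤ) + (r : ℕ) - (d : ℕ) - 1) * qZ n k (s : ℕ)))
  + ((j : ℂ) + (s : ℕ) - 1) •
      ((∑ d ∈ Finset.range j, pZ n k (d : ℕ) * qZ n k ((j : ℤ) + (s : ℕ) - (d : ℕ) - 1))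
        * pZ n k (r : ℕ))

/-!
Abstractly, `p` and `q` are sequences in a commutative ring with Cauchy product `R`. Grouped by `d`,
the sum `Σ_{r+s=m} A^{(rs)}_j` is a sum of terms `p_d p_a q_b` over two tails of the antidiagonal
`a + b = m + j - 1 - d`: the tail `a ≥ j - 1 - d` with weight `a - d`, and the tail
`b ≥ j - 1 - d` with weight `b + d`. Over the whole antidiagonal the two weights add up to `a + b`,
which gives `p_d · (a + b) R_{a+b}`. What the first tail misses is antisymmetric in `d` and `a`,
hence sums to zero; what the second tail misses sums to multiples of `t R_t` for `t < j - 1`.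
-/

section Antidiagonal

variable {M : Type*} [AddCommMonoid M]

theorem sum_antidiagonal_add_eq_sum_range_add (f : ℕ → ℕ → M) (e m : ℕ) :
    ∑ z ∈ antidiagonal (e + m), f z.1 z.2 =
      ∑ i ∈ range e, f i (e + m - i) + ∑ x ∈ antidiagonal m, f (e + x.1) x.2 := by
  rw [Nat.sum_antidiagonal_eq_sum_range_succ f,
    Nat.sum_antidiagonal_eq_sum_range_succ (fun a b => f (e + a) b), ← Nat.add_succ, sum_range_add]
  simp only [Nat.add_sub_add_left]

theorem sum_antidiagonal_sum_range_snd (f : ℕ → ℕ → M) (J : ℕ) :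
    ∑ y ∈ antidiagonal J, ∑ i ∈ range y.2, f y.1 i =
      ∑ t ∈ range J, ∑ y ∈ antidiagonal t, f y.1 y.2 := by
  simp only [Nat.sum_antidiagonal_eq_sum_range_succ f,
    Nat.sum_antidiagonal_eq_sum_range_succ (fun d e => ∑ i ∈ range e, f d i)]
  rw [sum_range_diag_flip, sum_range_succ, Nat.sub_self, range_zero, sum_empty, add_zero]

theorem sum_antidiagonal_tail_fst_add_sum_head (g : ℕ → ℕ → ℕ → M) (J m : ℕ) :
    ∑ y ∈ antidiagonal J, ∑ x ∈ antidiagonal m, g y.1 (y.2 + x.1) x.2 +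
        ∑ t ∈ range J, ∑ y ∈ antidiagonal t, g y.1 y.2 (J + m - t) =
      ∑ y ∈ antidiagonal J, ∑ z ∈ antidiagonal (y.2 + m), g y.1 z.1 z.2 := by
  have head : ∑ t ∈ range J, ∑ y ∈ antidiagonal t, g y.1 y.2 (J + m - t) =
      ∑ y ∈ antidiagonal J, ∑ i ∈ range y.2, g y.1 i (y.2 + m - i) := calc
    _ = ∑ t ∈ range J, ∑ y ∈ antidiagonal t, g y.1 y.2 (J + m - (y.1 + y.2)) :=
      sum_congr rfl fun t _ => sum_congr rfl fun y hy => by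
        rw [HasAntidiagonal.mem_antidiagonal.1 hy]
    _ = ∑ y ∈ antidiagonal J, ∑ i ∈ range y.2, g y.1 i (J + m - (y.1 + i)) :=
      (sum_antidiagonal_sum_range_snd (fun d i => g d i (J + m - (d + i))) J).symm
    _ = _ := sum_congr rfl fun y hy => sum_congr rfl fun i _ => by
      rw [← HasAntidiagonal.mem_antidiagonal.1 hy, add_assoc, Nat.add_sub_add_left]
  rw [head, add_comm, ← sum_add_distrib]
  exact sum_congr rfl fun y _ => (sum_antidiagonal_add_eq_sum_range_add (g y.1) y.2 m).symm

theorem sum_antidiagonal_tail_snd_add_sum_head (g : ℕ → ℕ → ℕ → M) (J m : ℕ) :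
    ∑ y ∈ antidiagonal J, ∑ x ∈ antidiagonal m, g y.1 x.1 (y.2 + x.2) +
        ∑ t ∈ range J, ∑ y ∈ antidiagonal t, g y.1 (J + m - t) y.2 =
      ∑ y ∈ antidiagonal J, ∑ z ∈ antidiagonal (y.2 + m), g y.1 z.1 z.2 := by
  have swap_tail (y : ℕ × ℕ) : ∑ x ∈ antidiagonal m, g y.1 x.1 (y.2 + x.2) =
      ∑ x ∈ antidiagonal m, g y.1 x.2 (y.2 + x.1) :=
    (Nat.sum_antidiagonal_swap (f := fun x => g y.1 x.1 (y.2 + x.2))).symm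
  have swap_full (y : ℕ × ℕ) : ∑ z ∈ antidiagonal (y.2 + m), g y.1 z.1 z.2 =
      ∑ z ∈ antidiagonal (y.2 + m), g y.1 z.2 z.1 :=
    (Nat.sum_antidiagonal_swap (f := fun z => g y.1 z.1 z.2)).symm
  rw [sum_congr rfl fun y _ => swap_tail y, sum_congr rfl fun y _ => swap_full y]
  exact sum_antidiagonal_tail_fst_add_sum_head (fun d b a => g d a b) J m

end Antidiagonal

section Sequences

variable {A : Type*} [CommRing A]

/-- The coefficients `R_t = Σ_{a+b=t} p_a q_b` of the Cauchy product of two sequences, of which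
`Rm` is the case of the Chern class generators. -/
def cauchyCoeff (p q : ℕ → A) (t : ℕ) : A :=
  ∑ z ∈ antidiagonal t, p z.1 * q z.2

/-- The expression `A^{(rs)}_{J+1}` for two sequences `p` and `q` in a commutative ring. The
summation index `0 ≤ d ≤ J` is encoded as the pair `y = (d, J - d)`. -/
def seqA (p q : ℕ → A) (J r s : ℕ) : A :=
  ∑ y ∈ antidiagonal J,
    ((((y.2 + r : ℕ) : A) - y.1) * (p y.1 * p (y.2 + r) * q s) +
      (((y.2 + s : ℕ) : A) + y.1) * (p y.1 * p r * q (y.2 + s)))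

theorem sum_antidiagonal_sub_mul_eq_zero (p : ℕ → A) (t : ℕ) :
    ∑ y ∈ antidiagonal t, ((y.2 : A) - y.1) * (p y.1 * p y.2) = 0 := by
  simp only [sub_mul, sum_sub_distrib]
  rw [sub_eq_zero, ← Nat.sum_antidiagonal_swap]
  simp only [Prod.fst_swap, Prod.snd_swap, mul_comm (p _) (p _)]

theorem sum_antidiagonal_add_mul (p q : ℕ → A) (t : ℕ) :
    ∑ y ∈ antidiagonal t, ((y.2 : A) + y.1) * (p y.1 * q y.2) = t * cauchyCoeff p q t := by
  rw [cauchyCoeff, mul_sum]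
  refine sum_congr rfl fun y hy => ?_
  rw [← HasAntidiagonal.mem_antidiagonal.1 hy, Nat.cast_add, add_comm (y.1 : A)]

theorem sum_tail_sub_mul (p q : ℕ → A) (J m : ℕ) :
    ∑ y ∈ antidiagonal J, ∑ x ∈ antidiagonal m,
        (((y.2 + x.1 : ℕ) : A) - y.1) * (p y.1 * p (y.2 + x.1) * q x.2) =
      ∑ y ∈ antidiagonal J, ∑ z ∈ antidiagonal (y.2 + m),
        ((z.1 : A) - y.1) * (p y.1 * p z.1 * q z.2) := by
  have head : ∑ t ∈ range J, ∑ y ∈ antidiagonal t,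
      ((y.2 : A) - y.1) * (p y.1 * p y.2 * q (J + m - t)) = 0 := by
    simp only [← mul_assoc (_ - _) (_ * _), ← sum_mul, sum_antidiagonal_sub_mul_eq_zero, zero_mul,
      sum_const_zero]
  rw [← sum_antidiagonal_tail_fst_add_sum_head (fun d a b => ((a : A) - d) * (p d * p a * q b)),
    head, add_zero]

theorem sum_tail_add_mul (p q : ℕ → A) (J m : ℕ) :
    ∑ y ∈ antidiagonal J, ∑ x ∈ antidiagonal m,
        (((y.2 + x.2 : ℕ) : A) + y.1) * (p y.1 * p x.1 * q (y.2 + x.2)) =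
      ∑ y ∈ antidiagonal J, ∑ z ∈ antidiagonal (y.2 + m),
          ((z.2 : A) + y.1) * (p y.1 * p z.1 * q z.2) -
        ∑ t ∈ range J, p (J + m - t) * (t * cauchyCoeff p q t) := by
  have head : ∑ t ∈ range J, p (J + m - t) * (t * cauchyCoeff p q t) =
      ∑ t ∈ range J, ∑ y ∈ antidiagonal t,
        ((y.2 : A) + y.1) * (p y.1 * p (J + m - t) * q y.2) := by
    simp only [← sum_antidiagonal_add_mul, mul_sum]
    exact sum_congr rfl fun t _ => sum_congr rfl fun y _ => by ring
  rw [head, eq_sub_iff_add_eq]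
  exact sum_antidiagonal_tail_snd_add_sum_head (fun d a b => ((b : A) + d) * (p d * p a * q b)) J m

theorem sum_seqA_eq (p q : ℕ → A) (J m : ℕ) :
    ∑ x ∈ antidiagonal m, seqA p q J x.1 x.2 =
      ∑ y ∈ antidiagonal J, p y.1 * ((y.2 + m : ℕ) * cauchyCoeff p q (y.2 + m)) -
        ∑ t ∈ range J, p (J + m - t) * (t * cauchyCoeff p q t) := by
  simp only [seqA]
  rw [sum_comm]
  simp only [sum_add_distrib]
  rw [sum_tail_sub_mul, sum_tail_add_mul, ← add_sub_assoc, ← sum_add_distrib]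
  congr 1
  refine sum_congr rfl fun y _ => ?_
  rw [← sum_antidiagonal_add_mul, mul_sum, ← sum_add_distrib]
  exact sum_congr rfl fun z _ => by ring

theorem sum_seqA_mem {I : Ideal A} {p q : ℕ → A} (hI : ∀ t, 1 ≤ t → cauchyCoeff p q t ∈ I)
    (J m : ℕ) : ∑ x ∈ antidiagonal m, seqA p q J x.1 x.2 ∈ I := by
  have natCast_mul_mem (t : ℕ) : (t : A) * cauchyCoeff p q t ∈ I := by
    obtain rfl | ht := t.eq_zero_or_pos
    · simp
    · exact I.mul_mem_left _ (hI t ht)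
  rw [sum_seqA_eq]
  exact I.sub_mem (I.sum_mem fun _ _ => I.mul_mem_left _ (natCast_mul_mem _))
    (I.sum_mem fun _ _ => I.mul_mem_left _ (natCast_mul_mem _))

end Sequences

section ChernClasses

variable {n k : ℕ}

theorem pZ_eq_zero_of_lt {a : ℕ} (h : k < a) : pZ n k a = 0 := by
  rw [pZ, if_neg (by omega), dif_neg (by omega)]

theorem qZ_eq_zero_of_lt {a : ℕ} (h : n - k < a) : qZ n k a = 0 := by
  rw [qZ, if_neg (by omega), dif_neg (by omega)]

theorem Rm_eq_zero_of_lt (hk : k ≤ n) {t : ℕ} (ht : n < t) : Rm n k t = 0 := by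
  refine sum_eq_zero fun x hx => ?_
  rw [HasAntidiagonal.mem_antidiagonal] at hx
  obtain h | h : k < x.1 ∨ n - k < x.2 := by omega
  · rw [pZ_eq_zero_of_lt h, zero_mul]
  · rw [qZ_eq_zero_of_lt h, mul_zero]

theorem Rm_mem_Igr (hk : k ≤ n) {t : ℕ} (ht : 1 ≤ t) : Rm n k t ∈ Igr n k := by
  obtain h | h := le_or_gt t n
  · exact Ideal.subset_span ⟨t, mem_coe.2 (mem_Icc.2 ⟨ht, h⟩), rfl⟩
  · exact Rm_eq_zero_of_lt hk h ▸ zero_mem _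

variable (n k)

theorem Rm_eq_cauchyCoeff (t : ℕ) :
    Rm n k t = cauchyCoeff (fun a => pZ n k a) (fun a => qZ n k a) t :=
  rfl

theorem Apoly_succ (J r s : ℕ) :
    Apoly n k (J + 1) r s = seqA (fun a => pZ n k a) (fun a => qZ n k a) J r s := by
  rw [Apoly, seqA, Nat.sum_antidiagonal_eq_sum_range_succ_mk, sum_mul, smul_sum, ← sum_add_distrib]
  refine sum_congr rfl fun d hd => ?_
  have hdJ : d ≤ J := Nat.lt_succ_iff.1 (mem_range.1 hd)
  have index (a : ℕ) : ((J + 1 : ℕ) : ℤ) + a - d - 1 = ((J - d + a : ℕ) : ℤ) := by omega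
  have p_weight : ((J + 1 : ℕ) : ℂ) + r - 2 * d - 1 = ((J - d + r : ℕ) : ℂ) - d := by
    push_cast [hdJ]; ring
  have q_weight : ((J + 1 : ℕ) : ℂ) + s - 1 = ((J - d + s : ℕ) : ℂ) + d := by
    push_cast [hdJ]; ring
  simp only [index, p_weight, q_weight, smul_eq_C_mul, map_sub, map_add, map_natCast]
  ring

end ChernClasses

theorem sum_A_mem_ideal_general (n k : ℕ) (hk : k ≤ n) (m j : ℕ) :
    ∑ x ∈ antidiagonal m, Apoly n k j x.1 x.2 ∈ Igr n k := by
  cases j with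
  | zero => simp [Apoly]
  | succ J =>
    simp only [Apoly_succ]
    exact sum_seqA_mem (fun t ht => Rm_eq_cauchyCoeff n k t ▸ Rm_mem_Igr hk ht) J m

/-- For every `1 ≤ m ≤ n` and `1 ≤ j ≤ k`, the sum `Σ_{r+s=m, r,s ≥ 0} A^{(rs)}_j`
lies in the ideal `I`. -/
theorem sum_A_mem_ideal (n k : ℕ) (hk1 : 1 ≤ k) (hk2 : k ≤ n - 1)
    (m : ℕ) (hm1 : 1 ≤ m) (hm2 : m ≤ n) (j : ℕ) (hj1 : 1 ≤ j) (hj2 : j ≤ k) :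
    ∑ x ∈ Finset.HasAntidiagonal.antidiagonal m, Apoly n k j x.1 x.2 ∈ Igr n k :=
  sum_A_mem_ideal_general n k (by omega) m j
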